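/- arXiv:1904.03088 — 2 statements merged into one kernel-verified Lean document; each statement's English description precedes it below -/
import Mathlib

section
/- Let d ≥ 2, let X be a real Banach space, f ∈ C_c^∞(ℝ^d, X) and λ > 0, and set f_λ(x) := f(λx). Then for every ξ ∈ ℝ^d, (Φ ∗ f_λ)(ξ) = λ^{−2} (Φ ∗ f)(λξ) + λ^{−d} c_d(λ) ∫_{ℝ^d} f(ω) dω, where c_d(λ) = 0 if d > 2 and c₂(λ) = −(log λ)/(2π). Consequently, for all j, k ∈ {1,…,d}, D_jD_k(Φ ∗ f_λ)(ξ) = (D_jD_k(Φ ∗ f))(λξ) for every ξ ∈ ℝ^d. -/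
open MeasureTheory

/-- The `i`-th standard basis vector of `ℝ^d`. -/
noncomputable def stdBasis {d : ℕ} (i : Fin d) : EuclideanSpace ℝ (Fin d) :=
  EuclideanSpace.single i (1 : ℝ)

/-- The second-order partial derivative `DⱼDₖ u` of a function `u : ℝ^d → X`. -/
noncomputable def secondPartial {d : ℕ} {X : Type*} [NormedAddCommGroup X]
    [NormedSpace ℝ X] (j k : Fin d) (u : EuclideanSpace ℝ (Fin d) → X)
    (x : EuclideanSpace ℝ (Fin d)) : X :=
  fderiv ℝ (fun y => fderiv ℝ u y (stdBasis k)) x (stdBasis j)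

/-- The fundamental solution of the Laplace equation on `ℝ^d`. -/
noncomputable def fundSol (d : ℕ) (ξ : EuclideanSpace ℝ (Fin d)) : ℝ :=
  if d = 2 then (2 * Real.pi)⁻¹ * Real.log ‖ξ‖
  else ((d : ℝ) * ((2 : ℝ) - d) *
      (volume (Metric.ball (0 : EuclideanSpace ℝ (Fin d)) 1)).toReal)⁻¹ *
    ‖ξ‖ ^ ((2 : ℝ) - d)

/-! Away from the origin `Φ(ζ) = |c|^d c⁻² Φ(cζ) + c_d(|c|)`. Put `ζ = ξ - η`, integrate against
`f(cη)` and substitute `ω = cη`, whose Jacobian is `|c|^{-d}`. Since the extra term does not depend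
on `ξ`, it is killed by `DⱼDₖ`, while the chain rule contributes a factor `c²` that cancels
`c⁻²`. -/

/-- The Newtonian potential `Φ ∗ f` of `f : ℝ^d → X`. It is junk where the integral does not
converge absolutely. -/
noncomputable def newtonianPotential {d : ℕ} {X : Type*} [NormedAddCommGroup X] [NormedSpace ℝ X]
    (f : EuclideanSpace ℝ (Fin d) → X) (ξ : EuclideanSpace ℝ (Fin d)) : X :=
  ∫ η, fundSol d (ξ - η) • f η

/-- The constant `c_d(r)` measuring the failure of `Φ` to be homogeneous of degree `2 - d` under
dilation by `r > 0`: it is nonzero only for the logarithmic kernel, in dimension two. -/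
noncomputable def scalingDefect (d : ℕ) (r : ℝ) : ℝ :=
  if d = 2 then -(Real.log r) / (2 * Real.pi) else 0

theorem fderiv_fun_const_smul_field {𝕜 E F R : Type*} [NontriviallyNormedField 𝕜]
    [NormedAddCommGroup E] [NormedSpace 𝕜 E] [NormedAddCommGroup F] [NormedSpace 𝕜 F]
    [DivisionSemiring R] [Module R F] [SMulCommClass 𝕜 R F] [ContinuousConstSMul R F]
    (a : R) (u : E → F) (x : E) : fderiv 𝕜 (fun y => a • u y) x = a • fderiv 𝕜 u x :=
  congrFun (fderiv_const_smul_field a) x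

section SecondPartial

variable {d : ℕ} {X : Type*} [NormedAddCommGroup X] [NormedSpace ℝ X] (j k : Fin d)
  (u : EuclideanSpace ℝ (Fin d) → X) (x : EuclideanSpace ℝ (Fin d))

theorem secondPartial_add_const (b : X) :
    secondPartial j k (fun y => u y + b) x = secondPartial j k u x := by
  simp only [secondPartial, fderiv_add_const]

theorem secondPartial_const_smul (a : ℝ) :
    secondPartial j k (fun y => a • u y) x = a • secondPartial j k u x := by
  simp only [secondPartial, fderiv_fun_const_smul_field, smul_apply]

theorem secondPartial_comp_smul (c : ℝ) :
    secondPartial j k (fun y => u (c • y)) x = c ^ 2 • secondPartial j k u (c • x) := by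
  simp only [secondPartial, fderiv_comp_smul c, smul_apply, fderiv_fun_const_smul_field]
  rw [fderiv_comp_smul (f := fun y => fderiv ℝ u y (stdBasis k)), smul_apply, smul_smul, sq]

end SecondPartial

section LocallyIntegrable

variable {E : Type*} [NormedAddCommGroup E] [NormedSpace ℝ E] [FiniteDimensional ℝ E]
  [Nontrivial E] [MeasurableSpace E] [BorelSpace E] (μ : Measure E) [μ.IsAddHaarMeasure]

theorem locallyIntegrable_log_norm : LocallyIntegrable (fun x : E => Real.log ‖x‖) μ := by
  intro x
  refine ⟨Metric.ball 0 (‖x‖ + 1), Metric.isOpen_ball.mem_nhds (by simp), ?_⟩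
  rw [integrableOn_fun_norm_addHaar μ,
    ← intervalIntegrable_iff_integrableOn_Ioo_of_le (by positivity)]
  exact intervalIntegral.intervalIntegrable_log'.continuousOn_mul (by fun_prop)

theorem locallyIntegrable_norm_rpow {s : ℝ} (hs : -(Module.finrank ℝ E : ℝ) < s) :
    LocallyIntegrable (fun x : E => ‖x‖ ^ s) μ := by
  refine locallyIntegrable_of_norm_le_rpow (C := 1) (α := -s) Module.finrank_pos (by linarith)
    (.of_forall fun x => ?_) (measurable_norm.pow_const s).aestronglyMeasurable
  rw [neg_neg, one_mul, Real.norm_of_nonneg (by positivity)]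

end LocallyIntegrable

section FundSol

variable {d : ℕ}

theorem fundSol_of_eq_two (hd : d = 2) : fundSol d = (2 * Real.pi)⁻¹ • fun ξ => Real.log ‖ξ‖ :=
  funext fun _ => if_pos hd

theorem fundSol_of_ne_two (hd : d ≠ 2) :
    fundSol d = ((d : ℝ) * (2 - d) *
      (volume (Metric.ball (0 : EuclideanSpace ℝ (Fin d)) 1)).toReal)⁻¹ •
        fun ξ => ‖ξ‖ ^ ((2 : ℝ) - d) :=
  funext fun _ => if_neg hd

theorem locallyIntegrable_fundSol [NeZero d] : LocallyIntegrable (fundSol d) := by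
  by_cases hd : d = 2
  · rw [fundSol_of_eq_two hd]
    exact (locallyIntegrable_log_norm volume).smul _
  · rw [fundSol_of_ne_two hd]
    refine (locallyIntegrable_norm_rpow volume ?_).smul _
    rw [finrank_euclideanSpace_fin]
    linarith

theorem fundSol_eq_mul_fundSol_smul_add {c : ℝ} (hc : c ≠ 0) {ξ : EuclideanSpace ℝ (Fin d)}
    (hξ : ξ ≠ 0) :
    fundSol d ξ = |c| ^ d * (c ^ 2)⁻¹ * fundSol d (c • ξ) + scalingDefect d |c| := by
  have hξ' : ‖ξ‖ ≠ 0 := norm_ne_zero_iff.2 hξ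
  have hc' : 0 < |c| := abs_pos.2 hc
  rw [← sq_abs c]
  by_cases hd : d = 2
  · subst hd
    have log_dilation : Real.log ‖c • ξ‖ = Real.log |c| + Real.log ‖ξ‖ := by
      rw [norm_smul, Real.norm_eq_abs, Real.log_mul hc'.ne' hξ']
    simp only [fundSol_of_eq_two, scalingDefect, if_true, Pi.smul_apply, smul_eq_mul, log_dilation]
    field_simp
    ring
  · have rpow_dilation :
        ‖c • ξ‖ ^ ((2 : ℝ) - d) = |c| ^ 2 * (|c| ^ d)⁻¹ * ‖ξ‖ ^ ((2 : ℝ) - d) := by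
      rw [norm_smul, Real.norm_eq_abs, Real.mul_rpow hc'.le (norm_nonneg ξ), Real.rpow_sub hc',
        Real.rpow_ofNat, Real.rpow_natCast, div_eq_mul_inv]
    simp only [fundSol_of_ne_two hd, scalingDefect, if_neg hd, Pi.smul_apply, smul_eq_mul,
      rpow_dilation, add_zero]
    field_simp

end FundSol

section NewtonianPotential

variable {d : ℕ} [NeZero d] {X : Type*} [NormedAddCommGroup X] [NormedSpace ℝ X]
  {f : EuclideanSpace ℝ (Fin d) → X}

theorem integrable_fundSol_sub_smul (hf : Continuous f) (hsupp : HasCompactSupport f)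
    (ξ : EuclideanSpace ℝ (Fin d)) : Integrable fun η => fundSol d (ξ - η) • f η := by
  have reflected : Integrable fun η => fundSol d η • f (ξ - η) :=
    locallyIntegrable_fundSol.integrable_smul_right_of_hasCompactSupport (by fun_prop)
      (hsupp.comp_homeomorph (Homeomorph.subLeft ξ))
  simpa only [sub_sub_cancel] using reflected.comp_sub_left ξ

theorem newtonianPotential_comp_smul {c : ℝ} (hc : c ≠ 0) (hf : Integrable f)
    {ξ : EuclideanSpace ℝ (Fin d)} (hΦf : Integrable fun η => fundSol d (c • ξ - η) • f η) :
    newtonianPotential (fun η => f (c • η)) ξ =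
      (c ^ 2)⁻¹ • newtonianPotential f (c • ξ) +
        ((|c| ^ d)⁻¹ * scalingDefect d |c|) • ∫ ω, f ω := by
  have hc' : |c| ^ d ≠ 0 := pow_ne_zero d (abs_ne_zero.2 hc)
  have kernel : ∀ᵐ η, fundSol d (ξ - η) =
      |c| ^ d * (c ^ 2)⁻¹ * fundSol d (c • ξ - c • η) + scalingDefect d |c| := by
    filter_upwards [Measure.ae_ne volume ξ] with η hη
    rw [← smul_sub]
    exact fundSol_eq_mul_fundSol_smul_add hc (sub_ne_zero.2 hη.symm)
  calc newtonianPotential (fun η => f (c • η)) ξ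
      = ∫ η, (|c| ^ d * (c ^ 2)⁻¹ * fundSol d (c • ξ - c • η) + scalingDefect d |c|) •
          f (c • η) :=
        integral_congr_ae (kernel.mono fun η hη => congrArg (· • f (c • η)) hη)
    _ = (|c| ^ d)⁻¹ • ∫ η, (|c| ^ d * (c ^ 2)⁻¹ * fundSol d (c • ξ - η) + scalingDefect d |c|) •
          f η := by
        rw [Measure.integral_comp_smul volume (fun η =>
          (|c| ^ d * (c ^ 2)⁻¹ * fundSol d (c • ξ - η) + scalingDefect d |c|) • f η) c,
          finrank_euclideanSpace_fin, abs_inv, abs_pow]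
    _ = (|c| ^ d)⁻¹ • ((|c| ^ d * (c ^ 2)⁻¹) • newtonianPotential f (c • ξ) +
          scalingDefect d |c| • ∫ ω, f ω) := by
        simp only [add_smul, mul_smul (|c| ^ d * (c ^ 2)⁻¹)]
        rw [integral_add (hΦf.fun_smul _) (hf.fun_smul _), integral_smul, integral_smul,
          newtonianPotential]
    _ = (c ^ 2)⁻¹ • newtonianPotential f (c • ξ) +
          ((|c| ^ d)⁻¹ * scalingDefect d |c|) • ∫ ω, f ω := by
        rw [smul_add, smul_smul, smul_smul, inv_mul_cancel_left₀ hc']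

theorem newtonian_potential_scaling_general (hf : Integrable f)
    (hΦf : ∀ ξ, Integrable fun η => fundSol d (ξ - η) • f η) {c : ℝ} (hc : c ≠ 0) :
    (∀ ξ, newtonianPotential (fun η => f (c • η)) ξ =
      (c ^ 2)⁻¹ • newtonianPotential f (c • ξ) +
        ((|c| ^ d)⁻¹ * scalingDefect d |c|) • ∫ ω, f ω) ∧
    ∀ j k ξ, secondPartial j k (newtonianPotential fun η => f (c • η)) ξ =
      secondPartial j k (newtonianPotential f) (c • ξ) := by
  have scaling ξ := newtonianPotential_comp_smul hc hf (hΦf (c • ξ))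
  refine ⟨scaling, fun j k ξ => ?_⟩
  rw [funext scaling, secondPartial_add_const, secondPartial_const_smul, secondPartial_comp_smul,
    inv_smul_smul₀ (pow_ne_zero 2 hc)]

end NewtonianPotential

/-- Scaling behaviour of the Newtonian potential: for
`f ∈ C_c^∞(ℝ^d, X)`, `λ > 0` and `f_λ(x) = f(λx)` one has
`(Φ ∗ f_λ)(ξ) = λ⁻²(Φ ∗ f)(λξ) + λ^{-d} c_d(λ) ∫ f`, where `c_d(λ) = 0` for `d > 2`
and `c₂(λ) = -(log λ)/(2π)`; consequently `DⱼDₖ(Φ ∗ f_λ)(ξ) = (DⱼDₖ(Φ ∗ f))(λξ)`. -/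
theorem newtonian_potential_scaling {d : ℕ} (hd : 2 ≤ d)
    {X : Type*} [NormedAddCommGroup X] [NormedSpace ℝ X] [CompleteSpace X]
    (f : EuclideanSpace ℝ (Fin d) → X) (hf : ContDiff ℝ (⊤ : ℕ∞) f)
    (hsupp : HasCompactSupport f) (lam : ℝ) (hlam : 0 < lam) :
    (∀ ξ : EuclideanSpace ℝ (Fin d),
      (∫ η, fundSol d (ξ - η) • f (lam • η)) =
        (lam ^ 2)⁻¹ • (∫ η, fundSol d (lam • ξ - η) • f η) +
        ((lam ^ d)⁻¹ * (if d = 2 then -(Real.log lam) / (2 * Real.pi) else 0)) •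
          ∫ ω, f ω) ∧
    ∀ j k : Fin d, ∀ ξ : EuclideanSpace ℝ (Fin d),
      secondPartial j k (fun ζ => ∫ η, fundSol d (ζ - η) • f (lam • η)) ξ =
        secondPartial j k (fun ζ => ∫ η, fundSol d (ζ - η) • f η) (lam • ξ) := by
  have : NeZero d := ⟨by omega⟩
  have scaling := newtonian_potential_scaling_general
    (hf.continuous.integrable_of_hasCompactSupport hsupp)
    (integrable_fundSol_sub_smul hf.continuous hsupp) hlam.ne'
  rw [abs_of_pos hlam] at scaling
  exact scaling
end

section
/- Let X be a Banach space, 1 < p < ∞, d ≥ 1, and j, k ∈ {1,…,d}. Suppose there exist μ > 0 and C ≥ 0 such that ‖D_jD_k f‖_{L^p(ℝ^d, X)} ≤ C ‖μ f − Δf‖_{L^p(ℝ^d, X)} for all f ∈ C_c^∞(ℝ^d, X). Then the homogeneous function m_∞(ξ) := −ξ_jξ_k/|ξ|² is an L^p(ℝ^d, X) Fourier multiplier; i.e. the operator f ↦ F^{−1}(m_∞ · F f) extends boundedly to L^p(ℝ^d, X). -/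
open MeasureTheory
open scoped ENNReal FourierTransform

/-- The Laplacian `Δu(x) = Σᵢ DᵢDᵢ u (x)` of a function `u : ℝ^d → X`. -/
noncomputable def lap {d : ℕ} {X : Type*} [NormedAddCommGroup X] [NormedSpace ℝ X]
    (u : EuclideanSpace ℝ (Fin d) → X) (x : EuclideanSpace ℝ (Fin d)) : X :=
  ∑ i : Fin d, fderiv ℝ (fun y => fderiv ℝ u y (stdBasis i)) x (stdBasis i)

/-!
Compactly supported functions are dense in the Schwartz space, so the hypothesis holds for all
Schwartz functions. Since `DⱼDₖ` and `Δ` are both homogeneous of degree two under dilations,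
replacing `f` by `f (c • ·)` shows that the estimate holds with the *same* constant `C` for every
spectral parameter `ε > 0`. Applied to `f = (ε - Δ)⁻¹ g`, it says that the Fourier multiplier with
symbol `-(2π)²ξⱼξₖ / (ε + (2π)²‖ξ‖²)` has norm at most `C`, uniformly in `ε`. As `ε → 0` these
operators applied to `g` converge pointwise, by dominated convergence on the Fourier side, to the
operator with symbol `-ξⱼξₖ / ‖ξ‖²`, and Fatou's lemma carries the bound over to the limit.
-/

section CompactlySupportedDense

open Filter Topology SchwartzMap
open scoped ContDiff SchwartzMap

variable {E F : Type*} [NormedAddCommGroup E] [NormedSpace ℝ E] [FiniteDimensional ℝ E]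
  [NormedAddCommGroup F] [NormedSpace ℝ F]

theorem exists_norm_iteratedFDeriv_one_sub_bump_le (χ : ContDiffBump (0 : E)) (i : ℕ) :
    ∃ M : ℝ, 0 ≤ M ∧ ∀ y, ‖iteratedFDeriv ℝ i (fun z => 1 - χ z) y‖ ≤ M * ‖y‖ := by
  have hχ : ContDiff ℝ ∞ χ := χ.contDiff
  have hDχ : ContDiff ℝ 1 (iteratedFDeriv ℝ i χ) :=
    hχ.iteratedFDeriv_right (by norm_cast; exact le_top)
  obtain ⟨L, hL⟩ := ContDiff.lipschitzWith_of_hasCompactSupport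
    (χ.hasCompactSupport.iteratedFDeriv i) hDχ one_ne_zero
  have hconst (y : E) : iteratedFDeriv ℝ i (fun _ : E => (1 : ℝ)) y =
      iteratedFDeriv ℝ i (fun _ : E => (1 : ℝ)) 0 := by
    cases i with
    | zero => ext; simp
    | succ i => simp [iteratedFDeriv_succ_const]
  have hone : iteratedFDeriv ℝ i χ 0 = iteratedFDeriv ℝ i (fun _ : E => (1 : ℝ)) 0 :=
    (χ.eventuallyEq_one.iteratedFDeriv ℝ i).eq_of_nhds
  refine ⟨L, L.coe_nonneg, fun y => ?_⟩
  have hsub : iteratedFDeriv ℝ i (fun z => 1 - χ z) y =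
      iteratedFDeriv ℝ i χ 0 - iteratedFDeriv ℝ i χ y := by
    rw [hone, ← hconst y]
    exact iteratedFDeriv_sub_apply contDiff_const.contDiffAt χ.contDiff.contDiffAt
  rw [hsub, norm_sub_rev]
  simpa only [dist_eq_norm, sub_zero] using hL.dist_le_mul y 0

theorem hasTemperateGrowth_bump_comp_smul (χ : ContDiffBump (0 : E)) (a : ℝ) :
    (fun x => χ (a • x)).HasTemperateGrowth := by
  have hχ : (χ : E → ℝ).HasTemperateGrowth := χ.hasCompactSupport.hasTemperateGrowth χ.contDiff
  exact hχ.comp (g := χ) (f := fun x => a • x) (by fun_prop)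

variable (F) in
/-- Multiplication of Schwartz functions by the dilated bump function `x ↦ χ (a • x)`; as `a → 0`
these multipliers exhaust `E`. -/
noncomputable def dilatedCutoff (χ : ContDiffBump (0 : E)) (a : ℝ) : 𝓢(E, F) →L[ℝ] 𝓢(E, F) :=
  smulLeftCLM F fun x => χ (a • x)

theorem coe_dilatedCutoff (χ : ContDiffBump (0 : E)) (a : ℝ) (f : 𝓢(E, F)) :
    ⇑(dilatedCutoff F χ a f) = fun x => χ (a • x) • f x :=
  smulLeftCLM_apply (hasTemperateGrowth_bump_comp_smul χ a) f

theorem hasCompactSupport_dilatedCutoff (χ : ContDiffBump (0 : E)) {a : ℝ} (ha : a ≠ 0)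
    (f : 𝓢(E, F)) : HasCompactSupport (dilatedCutoff F χ a f) := by
  rw [coe_dilatedCutoff]
  exact (χ.hasCompactSupport.comp_homeomorph (Homeomorph.smulOfNeZero a ha)).smul_right

theorem exists_seminorm_sub_dilatedCutoff_le (χ : ContDiffBump (0 : E)) (f : 𝓢(E, F)) (k n : ℕ) :
    ∃ K : ℝ, ∀ a : ℝ, |a| ≤ 1 →
      SchwartzMap.seminorm ℝ k n (f - dilatedCutoff F χ a f) ≤ |a| * K := by
  choose M hM0 hM using exists_norm_iteratedFDeriv_one_sub_bump_le χ
  have hψ : ContDiff ℝ ∞ fun z => 1 - χ z := contDiff_const.sub χ.contDiff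
  refine ⟨∑ i ∈ Finset.range (n + 1),
    n.choose i * M i * SchwartzMap.seminorm ℝ (k + 1) (n - i) f, fun a ha => ?_⟩
  have hcoe : ⇑(f - dilatedCutoff F χ a f) = fun x => (1 - χ (a • x)) • f x := by
    ext x
    simp [coe_dilatedCutoff, sub_smul]
  have hderiv (i : ℕ) (x : E) :
      ‖iteratedFDeriv ℝ i (fun z => 1 - χ (a • z)) x‖ ≤ |a| * M i * ‖x‖ := by
    have hpow : |a| ^ i ≤ 1 := pow_le_one₀ (abs_nonneg a) ha
    rw [iteratedFDeriv_comp_const_smul a (hψ.of_le (by norm_cast; exact le_top)),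
      norm_smul, norm_pow, Real.norm_eq_abs]
    calc |a| ^ i * ‖iteratedFDeriv ℝ i (fun z => 1 - χ z) (a • x)‖
        ≤ 1 * (M i * ‖a • x‖) := by gcongr; exact hM i _
      _ = |a| * M i * ‖x‖ := by rw [norm_smul, Real.norm_eq_abs]; ring
  refine seminorm_le_bound ℝ k n _ ?_ fun x => ?_
  · exact mul_nonneg (abs_nonneg a) (Finset.sum_nonneg fun i _ =>
      mul_nonneg (mul_nonneg (Nat.cast_nonneg _) (hM0 i)) (apply_nonneg _ f))
  rw [hcoe]
  calc ‖x‖ ^ k * ‖iteratedFDeriv ℝ n (fun x => (1 - χ (a • x)) • f x) x‖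
      ≤ ‖x‖ ^ k * ∑ i ∈ Finset.range (n + 1), n.choose i *
          ‖iteratedFDeriv ℝ i (fun z => 1 - χ (a • z)) x‖ * ‖iteratedFDeriv ℝ (n - i) f x‖ := by
        gcongr
        exact norm_iteratedFDeriv_smul_le (hψ.comp (contDiff_const_smul a)) (f.smooth ⊤) x
          (by norm_cast; exact le_top)
    _ ≤ ‖x‖ ^ k * ∑ i ∈ Finset.range (n + 1), n.choose i * (|a| * M i * ‖x‖) *
          ‖iteratedFDeriv ℝ (n - i) f x‖ := by
        gcongr with i
        exact hderiv i x
    _ = |a| * ∑ i ∈ Finset.range (n + 1), n.choose i * M i *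
          (‖x‖ ^ (k + 1) * ‖iteratedFDeriv ℝ (n - i) f x‖) := by
        simp only [Finset.mul_sum]
        exact Finset.sum_congr rfl fun i _ => by ring
    _ ≤ |a| * ∑ i ∈ Finset.range (n + 1), n.choose i * M i *
          SchwartzMap.seminorm ℝ (k + 1) (n - i) f := by
        gcongr with i
        · exact mul_nonneg (Nat.cast_nonneg _) (hM0 i)
        · exact le_seminorm ℝ (k + 1) (n - i) f x

theorem tendsto_dilatedCutoff (χ : ContDiffBump (0 : E)) (f : 𝓢(E, F)) :
    Tendsto (fun a => dilatedCutoff F χ a f) (𝓝 0) (𝓝 f) := by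
  rw [(schwartz_withSeminorms ℝ E F).tendsto_nhds]
  rintro ⟨k, n⟩ ε hε
  obtain ⟨K, hK⟩ := exists_seminorm_sub_dilatedCutoff_le χ f k n
  have hlim : Tendsto (fun a : ℝ => |a| * K) (𝓝 0) (𝓝 0) :=
    Continuous.tendsto' (by fun_prop) 0 0 (by simp)
  filter_upwards [hlim.eventually_lt_const hε, Metric.closedBall_mem_nhds (0 : ℝ) one_pos]
    with a haK ha
  rw [map_sub_rev]
  exact (hK a (by simpa using ha)).trans_lt haK

theorem dense_setOf_hasCompactSupport_schwartz :
    Dense {f : 𝓢(E, F) | HasCompactSupport f} := fun f =>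
  let χ : ContDiffBump (0 : E) := default
  mem_closure_of_tendsto (b := 𝓝[≠] (0 : ℝ))
    ((tendsto_dilatedCutoff χ f).mono_left nhdsWithin_le_nhds)
    (eventually_mem_nhdsWithin.mono fun _ ha => hasCompactSupport_dilatedCutoff χ ha f)

end CompactlySupportedDense

section LpEstimates

open Module
open scoped NNReal SchwartzMap

variable {E F : Type*} [NormedAddCommGroup E] [NormedSpace ℝ E] [MeasurableSpace E] [BorelSpace E]
  [NormedAddCommGroup F]

theorem continuous_eLpNorm_schwartz [NormedSpace ℝ F] [SecondCountableTopology E] {p : ℝ≥0∞}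
    (hp : 1 ≤ p) (μ : Measure E) [μ.HasTemperateGrowth] :
    Continuous fun f : 𝓢(E, F) => eLpNorm f p μ := by
  have : Fact (1 ≤ p) := ⟨hp⟩
  have hnorm (f : 𝓢(E, F)) : eLpNorm f p μ = ‖f.toLp p μ‖ₑ :=
    (Lp.enorm_toLp (f.memLp p μ)).symm
  simpa only [hnorm] using SchwartzMap.continuous_toLp.enorm

theorem eLpNorm_le_of_forall_hasCompactSupport [NormedSpace ℝ F] [FiniteDimensional ℝ E]
    {p : ℝ≥0∞} (hp : 1 ≤ p) {μ : Measure E} [μ.HasTemperateGrowth] {A B : 𝓢(E, F) → 𝓢(E, F)}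
    (hA : Continuous A) (hB : Continuous B) {C : ℝ≥0}
    (h : ∀ f : 𝓢(E, F), HasCompactSupport f → eLpNorm (A f) p μ ≤ C * eLpNorm (B f) p μ)
    (f : 𝓢(E, F)) : eLpNorm (A f) p μ ≤ C * eLpNorm (B f) p μ := by
  have hclosed : IsClosed {f | eLpNorm (A f) p μ ≤ C * eLpNorm (B f) p μ} :=
    isClosed_le ((continuous_eLpNorm_schwartz hp μ).comp hA)
      ((ENNReal.continuous_const_mul ENNReal.coe_ne_top).comp
        ((continuous_eLpNorm_schwartz hp μ).comp hB))
  exact dense_setOf_hasCompactSupport_schwartz.induction h hclosed f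

theorem eLpNorm_comp_smul [FiniteDimensional ℝ E] (u : E → F) (p : ℝ≥0∞) (μ : Measure E)
    [μ.IsAddHaarMeasure] {c : ℝ} (hc : c ≠ 0) :
    eLpNorm (fun x => u (c • x)) p μ =
      ENNReal.ofReal |(c ^ finrank ℝ E)⁻¹| ^ (1 / p).toReal * eLpNorm u p μ := by
  have hme : MeasurableEmbedding fun x : E => c • x :=
    (Homeomorph.smulOfNeZero c hc).measurableEmbedding
  have hscale : ENNReal.ofReal |(c ^ finrank ℝ E)⁻¹| ≠ 0 := by
    simpa using pow_pos (abs_pos.2 hc) _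
  rw [← smul_eq_mul, ← eLpNorm_smul_measure_of_ne_zero hscale, ← Measure.map_addHaar_smul μ hc,
    hme.eLpNorm_map_measure]
  rfl

end LpEstimates

section Dilation

open Module
open scoped LineDeriv SchwartzMap

variable {E F : Type*} [NormedAddCommGroup E] [NormedSpace ℝ E]
  [NormedAddCommGroup F] [NormedSpace ℝ F]

/-- The dilation `f ↦ f (c • ·)` of Schwartz functions. -/
noncomputable def schwartzDilate (c : ℝˣ) : 𝓢(E, F) →L[ℝ] 𝓢(E, F) :=
  SchwartzMap.compCLMOfContinuousLinearEquiv ℝ (ContinuousLinearEquiv.smulLeft c)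

theorem lineDerivOp_schwartzDilate (c : ℝˣ) (v : E) (f : 𝓢(E, F)) :
    ∂_{v} (schwartzDilate c f) = (c : ℝ) • schwartzDilate c (∂_{v} f) := by
  rw [schwartzDilate, SchwartzMap.lineDerivOp_compCLMOfContinuousLinearEquiv, ← map_smul,
    ← LineDeriv.lineDerivOp_left_smul]
  rfl

theorem lineDerivOp_lineDerivOp_schwartzDilate (c : ℝˣ) (v w : E) (f : 𝓢(E, F)) :
    ∂_{v} (∂_{w} (schwartzDilate c f)) = (c : ℝ) ^ 2 • schwartzDilate c (∂_{v} (∂_{w} f)) := by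
  rw [lineDerivOp_schwartzDilate, LineDeriv.lineDerivOp_smul, lineDerivOp_schwartzDilate,
    smul_smul, sq]

variable [MeasurableSpace E] [BorelSpace E] [FiniteDimensional ℝ E]

theorem eLpNorm_smul_schwartzDilate (c : ℝˣ) (b : ℝ) (f : 𝓢(E, F)) (p : ℝ≥0∞) (μ : Measure E)
    [μ.IsAddHaarMeasure] :
    eLpNorm (b • schwartzDilate c f : 𝓢(E, F)) p μ =
      ‖b‖ₑ * ENNReal.ofReal |((c : ℝ) ^ finrank ℝ E)⁻¹| ^ (1 / p).toReal * eLpNorm f p μ := by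
  rw [mul_assoc, ← eLpNorm_comp_smul f p μ c.ne_zero, ← eLpNorm_const_smul]
  rfl

end Dilation

section ResolventScaling

open Module
open scoped LineDeriv Laplacian SchwartzMap

variable {E F : Type*} [NormedAddCommGroup E] [InnerProductSpace ℝ E] [FiniteDimensional ℝ E]
  [NormedAddCommGroup F] [NormedSpace ℝ F]

theorem laplacian_schwartzDilate (c : ℝˣ) (f : 𝓢(E, F)) :
    Δ (schwartzDilate c f) = (c : ℝ) ^ 2 • schwartzDilate c (Δ f) := by
  simp only [SchwartzMap.laplacian_eq_sum (stdOrthonormalBasis ℝ E),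
    lineDerivOp_lineDerivOp_schwartzDilate, map_sum, Finset.smul_sum]

theorem eLpNorm_lineDerivOp_le_of_resolvent_estimate [MeasurableSpace E] [BorelSpace E] {v w : E}
    {p : ℝ≥0∞} {μ : Measure E} [μ.IsAddHaarMeasure] {C : ℝ≥0∞} {a b : ℝ} (ha : 0 < a) (hb : 0 < b)
    (h : ∀ f : 𝓢(E, F),
      eLpNorm (∂_{v} (∂_{w} f) : 𝓢(E, F)) p μ ≤ C * eLpNorm (a • f - Δ f) p μ)
    (f : 𝓢(E, F)) :
    eLpNorm (∂_{v} (∂_{w} f) : 𝓢(E, F)) p μ ≤ C * eLpNorm (b • f - Δ f) p μ := by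
  obtain ⟨c, hc⟩ : ∃ c : ℝˣ, a = (c : ℝ) ^ 2 * b :=
    ⟨Units.mk0 √(a / b) (by positivity), by
      rw [Units.val_mk0, Real.sq_sqrt (by positivity), div_mul_cancel₀ a hb.ne']⟩
  have hres : a • schwartzDilate c f - Δ (schwartzDilate c f) =
      (c : ℝ) ^ 2 • schwartzDilate c (b • f - Δ f) := by
    rw [laplacian_schwartzDilate, hc, map_sub, map_smul, smul_sub, smul_smul]
  set K := ‖(c : ℝ) ^ 2‖ₑ * ENNReal.ofReal |((c : ℝ) ^ finrank ℝ E)⁻¹| ^ (1 / p).toReal with hK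
  have hscaled :
      K * eLpNorm (∂_{v} (∂_{w} f) : 𝓢(E, F)) p μ ≤ K * (C * eLpNorm (b • f - Δ f) p μ) := by
    have hdil := h (schwartzDilate c f)
    rwa [lineDerivOp_lineDerivOp_schwartzDilate, hres, eLpNorm_smul_schwartzDilate,
      eLpNorm_smul_schwartzDilate, mul_left_comm] at hdil
  have hK0 : K ≠ 0 := by
    simp [hK, ENNReal.rpow_eq_zero_iff]
  have hKtop : K ≠ ⊤ := ENNReal.mul_ne_top enorm_ne_top
    (ENNReal.rpow_ne_top_of_nonneg ENNReal.toReal_nonneg ENNReal.ofReal_ne_top)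
  exact (ENNReal.mul_le_mul_iff_right hK0 hKtop).1 hscaled

end ResolventScaling

section Symbols

open Filter Real Topology
open scoped InnerProductSpace

variable {E : Type*} [NormedAddCommGroup E] [InnerProductSpace ℝ E]

theorem hasTemperateGrowth_inv_add_norm_sq {s : ℝ} (hs : 0 < s) :
    (fun ξ : E => (s + ‖ξ‖ ^ 2)⁻¹).HasTemperateGrowth := by
  have hbracket := (Function.hasTemperateGrowth_one_add_norm_sq_rpow E (-1)).comp
    (f := fun ξ : E => (√s)⁻¹ • ξ) (by fun_prop)
  have heq : (fun ξ : E => (s + ‖ξ‖ ^ 2)⁻¹) =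
      fun ξ => s⁻¹ * (1 + ‖(√s)⁻¹ • ξ‖ ^ 2) ^ (-1 : ℝ) := by
    ext ξ
    rw [rpow_neg_one, norm_smul, mul_pow, norm_inv, inv_pow, norm_eq_abs, sq_abs, sq_sqrt hs.le,
      ← mul_inv, mul_add, mul_one, mul_inv_cancel_left₀ hs.ne']
  rw [heq]
  exact (Function.HasTemperateGrowth.const s⁻¹).mul hbracket

/-- The symbol of the resolvent `((2π)²s - Δ)⁻¹` for `s > 0`. The spectral parameter is normalised
so that the symbol is a multiple of `(s + ‖ξ‖²)⁻¹`. -/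
noncomputable def resolventSymbol (s : ℝ) (ξ : E) : ℝ :=
  ((2 * π) ^ 2)⁻¹ * (s + ‖ξ‖ ^ 2)⁻¹

theorem hasTemperateGrowth_resolventSymbol {s : ℝ} (hs : 0 < s) :
    (resolventSymbol s : E → ℝ).HasTemperateGrowth :=
  (Function.HasTemperateGrowth.const _).mul (hasTemperateGrowth_inv_add_norm_sq hs)

/-- The symbol of `∂ᵥ∂_w ((2π)²s - Δ)⁻¹`. At `s = 0` it is the homogeneous function
`-⟪ξ, v⟫⟪ξ, w⟫ / ‖ξ‖²`, with value `0` at `ξ = 0` by the convention for division by zero. -/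
noncomputable def rieszSymbol (v w : E) (s : ℝ) (ξ : E) : ℝ :=
  -(⟪ξ, v⟫_ℝ * ⟪ξ, w⟫_ℝ) / (s + ‖ξ‖ ^ 2)

theorem hasTemperateGrowth_rieszSymbol (v w : E) {s : ℝ} (hs : 0 < s) :
    (rieszSymbol v w s).HasTemperateGrowth := by
  have hnum : (fun ξ : E => -(⟪ξ, v⟫_ℝ * ⟪ξ, w⟫_ℝ)).HasTemperateGrowth := by fun_prop
  exact hnum.mul (hasTemperateGrowth_inv_add_norm_sq hs)

theorem norm_rieszSymbol_le (v w : E) {s : ℝ} (hs : 0 ≤ s) (ξ : E) :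
    ‖rieszSymbol v w s ξ‖ ≤ ‖v‖ * ‖w‖ := by
  rw [rieszSymbol, norm_div, norm_neg, norm_mul,
    Real.norm_of_nonneg (add_nonneg hs (sq_nonneg ‖ξ‖))]
  refine div_le_of_le_mul₀ (by positivity) (by positivity) ?_
  calc ‖⟪ξ, v⟫_ℝ‖ * ‖⟪ξ, w⟫_ℝ‖
      ≤ (‖ξ‖ * ‖v‖) * (‖ξ‖ * ‖w‖) := by gcongr <;> exact norm_inner_le_norm _ _
    _ = ‖v‖ * ‖w‖ * ‖ξ‖ ^ 2 := by ring
    _ ≤ ‖v‖ * ‖w‖ * (s + ‖ξ‖ ^ 2) := by gcongr; exact le_add_of_nonneg_left hs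

theorem tendsto_rieszSymbol_zero (v w ξ : E) :
    Tendsto (fun s => rieszSymbol v w s ξ) (𝓝 0) (𝓝 (rieszSymbol v w 0 ξ)) := by
  rcases eq_or_ne ξ 0 with rfl | hξ
  · simp [rieszSymbol]
  · have hne : (0 : ℝ) + ‖ξ‖ ^ 2 ≠ 0 := by simpa using hξ
    exact tendsto_const_nhds.div (tendsto_id.add_const _) hne

end Symbols

section LaplacianResolvent

open Filter Real Topology
open SchwartzMap (fourierMultiplierCLM)
open scoped InnerProductSpace Laplacian LineDeriv SchwartzMap

variable {E X : Type*} [NormedAddCommGroup E] [InnerProductSpace ℝ E] [FiniteDimensional ℝ E]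
  [MeasurableSpace E] [BorelSpace E] [NormedAddCommGroup X] [NormedSpace ℂ X]

theorem fourierMultiplierCLM_add {m₁ m₂ : E → ℝ} (h₁ : m₁.HasTemperateGrowth)
    (h₂ : m₂.HasTemperateGrowth) :
    fourierMultiplierCLM X (m₁ + m₂) = fourierMultiplierCLM X m₁ + fourierMultiplierCLM X m₂ := by
  ext1 f
  simp only [SchwartzMap.fourierMultiplierCLM_apply, _root_.add_apply,
    SchwartzMap.smulLeftCLM_add h₁ h₂, FourierTransform.fourierInv_add]

theorem coe_fourierMultiplierCLM {m : E → ℝ} (hm : m.HasTemperateGrowth) (f : 𝓢(E, X)) :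
    ⇑(fourierMultiplierCLM X m f) = 𝓕⁻ fun ξ => m ξ • 𝓕 (f : E → X) ξ := by
  rw [SchwartzMap.fourierMultiplierCLM_apply, SchwartzMap.fourierInv_coe,
    SchwartzMap.smulLeftCLM_apply hm, SchwartzMap.fourier_coe]

theorem tendsto_fourierInv_smul {ι : Type*} {l : Filter ι} [l.IsCountablyGenerated]
    {m : ι → E → ℝ} {m₀ : E → ℝ} {M : ℝ} {h : E → X} (hh : Integrable h)
    (hmeas : ∀ᶠ i in l, AEStronglyMeasurable (m i)) (hbound : ∀ᶠ i in l, ∀ ξ, ‖m i ξ‖ ≤ M)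
    (hlim : ∀ ξ, Tendsto (fun i => m i ξ) l (𝓝 (m₀ ξ))) (x : E) :
    Tendsto (fun i => 𝓕⁻ (fun ξ => m i ξ • h ξ) x) l (𝓝 (𝓕⁻ (fun ξ => m₀ ξ • h ξ) x)) := by
  simp only [Real.fourierInv_eq']
  refine tendsto_integral_filter_of_dominated_convergence (fun ξ => M * ‖h ξ‖) ?_ ?_
    (hh.norm.const_mul M) (.of_forall fun ξ => ?_)
  · filter_upwards [hmeas] with i hi
    exact AEStronglyMeasurable.smul (by fun_prop) (hi.smul hh.aestronglyMeasurable)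
  · filter_upwards [hbound] with i hi
    refine .of_forall fun ξ => ?_
    rw [norm_smul, Complex.norm_exp_ofReal_mul_I, one_mul, norm_smul]
    gcongr
    exact hi ξ
  · exact ((hlim ξ).smul_const (h ξ)).const_smul _

variable [CompleteSpace X]

theorem smul_sub_laplacian_eq_fourierMultiplierCLM (a : ℝ) (f : 𝓢(E, X)) :
    a • f - Δ f = fourierMultiplierCLM X (fun ξ => a + (2 * π) ^ 2 * ‖ξ‖ ^ 2) f := by
  have hsq : (fun ξ : E => ‖ξ‖ ^ 2).HasTemperateGrowth := by fun_prop
  have hsum : (fun ξ : E => a + (2 * π) ^ 2 * ‖ξ‖ ^ 2) =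
      (fun _ => a) + (2 * π) ^ 2 • fun ξ => ‖ξ‖ ^ 2 := rfl
  rw [hsum, fourierMultiplierCLM_add (.const a) (by fun_prop),
    SchwartzMap.fourierMultiplierCLM_smul hsq, SchwartzMap.fourierMultiplierCLM_const,
    SchwartzMap.laplacian_eq_fourierMultiplierCLM, neg_smul, sub_neg_eq_add]
  rfl

theorem lineDerivOp_lineDerivOp_eq_fourierMultiplierCLM (v w : E) (f : 𝓢(E, X)) :
    ∂_{v} (∂_{w} f) =
      fourierMultiplierCLM X (fun ξ => -(2 * π) ^ 2 * (⟪ξ, v⟫_ℝ * ⟪ξ, w⟫_ℝ)) f := by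
  have hinner (u : E) : (fun ξ : E => ⟪ξ, u⟫_ℝ).HasTemperateGrowth := by fun_prop
  have hprod : (fun ξ : E => -(2 * π) ^ 2 * (⟪ξ, v⟫_ℝ * ⟪ξ, w⟫_ℝ)) =
      (-(2 * π) ^ 2) • ((fun ξ => ⟪ξ, v⟫_ℝ) * fun ξ => ⟪ξ, w⟫_ℝ) := rfl
  have hI : 2 * (π : ℂ) * Complex.I * (2 * π * Complex.I) = ((-(2 * π) ^ 2 : ℝ) : ℂ) := by
    push_cast
    linear_combination (4 * (π : ℂ) ^ 2) * Complex.I_sq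
  rw [hprod, SchwartzMap.fourierMultiplierCLM_smul ((hinner v).mul (hinner w)),
    SchwartzMap.lineDeriv_eq_fourierMultiplierCLM w, LineDeriv.lineDerivOp_smul,
    SchwartzMap.lineDeriv_eq_fourierMultiplierCLM v, smul_smul, hI, Complex.coe_smul,
    SchwartzMap.fourierMultiplierCLM_fourierMultiplierCLM_apply (hinner v) (hinner w)]
  rfl

/-- The resolvent `((2π)²s - Δ)⁻¹` of the Laplacian on Schwartz functions, for `s > 0`. -/
noncomputable def laplacianResolvent (s : ℝ) : 𝓢(E, X) →L[ℝ] 𝓢(E, X) :=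
  fourierMultiplierCLM X (resolventSymbol s)

theorem smul_sub_laplacian_laplacianResolvent {s : ℝ} (hs : 0 < s) (g : 𝓢(E, X)) :
    ((2 * π) ^ 2 * s) • laplacianResolvent s g - Δ (laplacianResolvent s g) = g := by
  have hone : ((fun ξ : E => (2 * π) ^ 2 * s + (2 * π) ^ 2 * ‖ξ‖ ^ 2) *
      resolventSymbol s) = fun _ => 1 := by
    ext ξ
    have : s + ‖ξ‖ ^ 2 ≠ 0 := by positivity
    simp only [Pi.mul_apply, resolventSymbol]
    field_simp
  rw [smul_sub_laplacian_eq_fourierMultiplierCLM, laplacianResolvent,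
    SchwartzMap.fourierMultiplierCLM_fourierMultiplierCLM_apply (by fun_prop)
      (hasTemperateGrowth_resolventSymbol hs), hone,
    SchwartzMap.fourierMultiplierCLM_const, one_smul, ContinuousLinearMap.id_apply]

theorem lineDerivOp_lineDerivOp_laplacianResolvent (v w : E) {s : ℝ} (hs : 0 < s) (g : 𝓢(E, X)) :
    ⇑(∂_{v} (∂_{w} (laplacianResolvent s g)) : 𝓢(E, X)) =
      𝓕⁻ fun ξ => rieszSymbol v w s ξ • 𝓕 (g : E → X) ξ := by
  have hprod : ((fun ξ : E => -(2 * π) ^ 2 * (⟪ξ, v⟫_ℝ * ⟪ξ, w⟫_ℝ)) *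
      resolventSymbol s) = rieszSymbol v w s := by
    ext ξ
    simp only [Pi.mul_apply, resolventSymbol, rieszSymbol]
    field_simp
  have hderiv : (fun ξ : E => -(2 * π) ^ 2 * (⟪ξ, v⟫_ℝ * ⟪ξ, w⟫_ℝ)).HasTemperateGrowth := by
    fun_prop
  rw [lineDerivOp_lineDerivOp_eq_fourierMultiplierCLM, laplacianResolvent,
    SchwartzMap.fourierMultiplierCLM_fourierMultiplierCLM_apply hderiv
      (hasTemperateGrowth_resolventSymbol hs),
    hprod, coe_fourierMultiplierCLM (hasTemperateGrowth_rieszSymbol v w hs)]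

theorem tendsto_lineDerivOp_lineDerivOp_laplacianResolvent (v w : E) (g : 𝓢(E, X)) (x : E) :
    Tendsto (fun s => (∂_{v} (∂_{w} (laplacianResolvent s g)) : 𝓢(E, X)) x) (𝓝[>] 0)
      (𝓝 (𝓕⁻ (fun ξ => rieszSymbol v w 0 ξ • 𝓕 (g : E → X) ξ) x)) := by
  have hint : Integrable (𝓕 (g : E → X)) := SchwartzMap.fourier_coe g ▸ (𝓕 g).integrable
  have hpos : ∀ᶠ s : ℝ in 𝓝[>] 0, 0 < s := eventually_mem_nhdsWithin
  have hlim := tendsto_fourierInv_smul hint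
    (hpos.mono fun s hs =>
      (hasTemperateGrowth_rieszSymbol v w hs).1.continuous.aestronglyMeasurable)
    (hpos.mono fun s hs => norm_rieszSymbol_le v w hs.le)
    (fun ξ => (tendsto_rieszSymbol_zero v w ξ).mono_left nhdsWithin_le_nhds) x
  exact hlim.congr' <| hpos.mono fun s hs =>
    (congrFun (lineDerivOp_lineDerivOp_laplacianResolvent v w hs g) x).symm

end LaplacianResolvent

section RieszMultiplier

open Filter Real Topology
open scoped InnerProductSpace Laplacian LineDeriv NNReal SchwartzMap

variable {E X : Type*} [NormedAddCommGroup E] [InnerProductSpace ℝ E] [FiniteDimensional ℝ E]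
  [MeasurableSpace E] [BorelSpace E] [NormedAddCommGroup X] [NormedSpace ℂ X] [CompleteSpace X]

theorem resolvent_estimate_implies_riesz_multiplier_general {p : ℝ≥0∞} (hp : 1 ≤ p) {v w : E}
    {a : ℝ} (ha : 0 < a) {C : ℝ≥0}
    (hest : ∀ f : 𝓢(E, X), HasCompactSupport f →
      eLpNorm (∂_{v} (∂_{w} f) : 𝓢(E, X)) p volume ≤ C * eLpNorm (a • f - Δ f) p volume)
    (g : 𝓢(E, X)) :
    eLpNorm (𝓕⁻ fun ξ => (-(⟪ξ, v⟫_ℝ * ⟪ξ, w⟫_ℝ) / ‖ξ‖ ^ 2) • 𝓕 (g : E → X) ξ) p volume ≤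
      C * eLpNorm g p volume := by
  have hschwartz (f : 𝓢(E, X)) :
      eLpNorm (∂_{v} (∂_{w} f) : 𝓢(E, X)) p volume ≤ C * eLpNorm (a • f - Δ f) p volume :=
    eLpNorm_le_of_forall_hasCompactSupport hp (A := fun f => ∂_{v} (∂_{w} f))
      (B := fun f => a • f - Δ f) (by fun_prop)
      ((continuous_const_smul a).sub (LineDeriv.laplacianCLM ℝ E 𝓢(E, X)).continuous) hest f
  have hresolvent {s : ℝ} (hs : 0 < s) :
      eLpNorm (∂_{v} (∂_{w} (laplacianResolvent s g)) : 𝓢(E, X)) p volume ≤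
        C * eLpNorm g p volume := by
    have hdilated := eLpNorm_lineDerivOp_le_of_resolvent_estimate ha
      (b := (2 * π) ^ 2 * s) (by positivity) hschwartz (laplacianResolvent s g)
    rwa [smul_sub_laplacian_laplacianResolvent hs] at hdilated
  have hpos : ∀ᶠ s : ℝ in 𝓝[>] 0, 0 < s := eventually_mem_nhdsWithin
  have hlim := tendsto_lineDerivOp_lineDerivOp_laplacianResolvent v w g
  simp only [rieszSymbol, zero_add] at hlim
  exact Lp.eLpNorm_le_of_ae_tendsto (hpos.mono fun s hs => hresolvent hs)
    (fun s => (SchwartzMap.continuous _).aestronglyMeasurable) (.of_forall hlim)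

end RieszMultiplier

section Coordinates

open scoped InnerProductSpace Laplacian LineDeriv SchwartzMap

variable {d : ℕ} {X : Type*} [NormedAddCommGroup X] [NormedSpace ℝ X]

theorem inner_stdBasis (ξ : EuclideanSpace ℝ (Fin d)) (i : Fin d) : ⟪ξ, stdBasis i⟫_ℝ = ξ i := by
  simp [stdBasis, EuclideanSpace.inner_single_right]

theorem secondPartial_eq_lineDerivOp (j k : Fin d) (f : 𝓢(EuclideanSpace ℝ (Fin d), X)) :
    secondPartial j k f = ∂_{stdBasis j} (∂_{stdBasis k} f) := by
  ext x
  simp only [SchwartzMap.lineDerivOp_apply_eq_fderiv]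
  rfl

theorem lap_eq_laplacian (f : 𝓢(EuclideanSpace ℝ (Fin d), X)) : lap f = Δ f := by
  ext x
  rw [SchwartzMap.laplacian_eq_sum (EuclideanSpace.basisFun (Fin d) ℝ)]
  simp only [sum_apply, EuclideanSpace.basisFun_apply]
  exact Finset.sum_congr rfl fun i _ => congrFun (secondPartial_eq_lineDerivOp i i f) x

end Coordinates

/-- If `‖DⱼDₖ f‖_{L^p} ≤ C ‖μf − Δf‖_{L^p}` for all
`f ∈ C_c^∞(ℝ^d, X)`, then the homogeneous function `m_∞(ξ) = -ξⱼξₖ/|ξ|²` is an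
`L^p(ℝ^d, X)` Fourier multiplier: the operator `f ↦ 𝓕⁻(m_∞ · 𝓕 f)` is bounded in the
`L^p` norm on the dense class `C_c^∞(ℝ^d, X)` (hence extends boundedly). -/
theorem resolvent_estimate_implies_riesz_multiplier {d : ℕ} (hd : 1 ≤ d)
    {X : Type*} [NormedAddCommGroup X] [NormedSpace ℂ X] [CompleteSpace X]
    (p : ℝ≥0∞) (hp : 1 < p) (hp' : p ≠ ⊤) (j k : Fin d) (mu : ℝ) (hmu : 0 < mu)
    (C : ℝ) (hC : 0 ≤ C)
    (hest : ∀ f : EuclideanSpace ℝ (Fin d) → X, ContDiff ℝ (⊤ : ℕ∞) f →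
      HasCompactSupport f →
      eLpNorm (fun ξ => secondPartial j k f ξ) p volume ≤
        ENNReal.ofReal C * eLpNorm (fun ξ => mu • f ξ - lap f ξ) p volume) :
    ∃ C' : ℝ, 0 ≤ C' ∧
      ∀ f : EuclideanSpace ℝ (Fin d) → X, ContDiff ℝ (⊤ : ℕ∞) f → HasCompactSupport f →
        eLpNorm (𝓕⁻ (fun ξ => (-(ξ j * ξ k) / ‖ξ‖ ^ 2 : ℝ) • 𝓕 f ξ)) p volume ≤
          ENNReal.ofReal C' * eLpNorm f p volume := by
  have hschwartz (g : SchwartzMap (EuclideanSpace ℝ (Fin d)) X) (hg : HasCompactSupport g) :=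
    hest g (g.smooth ⊤) hg
  simp only [secondPartial_eq_lineDerivOp, lap_eq_laplacian] at hschwartz
  refine ⟨C, hC, fun f hf hfc => ?_⟩
  have hriesz := resolvent_estimate_implies_riesz_multiplier_general hp.le hmu
    (C := C.toNNReal) hschwartz (hfc.toSchwartzMap hf)
  simp only [inner_stdBasis] at hriesz
  exact hriesz
end
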